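/- Suppose γ : ℕ × ℕ → ℕ is such that for every prime p, every finite extension L of ℚ_p of degree d' with residue field degree f_L, and every k×n m-sparse polynomial system over L, the number of isolated roots of that system in L^n is at most p^{d'n}·(1 − 1/p^{f_L})^n·γ(n,m). Fix positive integers d and δ, let L be the compositum inside a fixed algebraic closure of ℚ_2 (contained in ℂ_2) of all finite extensions of ℚ_2 of degree at most dδ, and let D_2 and f_2 be the degree and residue field degree of L over ℚ_2. Then for every degree-d algebraic extension 𝓛 of ℚ, regarded as a subfield of ℂ, and every k×n m-sparse polynomial system G over 𝓛, the number of isolated roots of G in ℂ^n of degree at most δ over 𝓛 is at most 2^{nD_2}·(1 − 1/2^{f_2})^n·γ(n,m). -/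

import Mathlib

/-!
If `x` is an isolated root of `G` over an algebraically closed normed field `F`, then its maximal
ideal is minimal over the ideal `(G)`: otherwise `x` lies on a variety `V(p)` of dimension `s ≥ 1`;
by Noether normalization `V(p)` is finite over affine `s`-space, and the points of that space close
to the image of `x` lift to points of `V(p)` close to `x`, because the roots of a monic polynomial
vary continuously with its coefficients. Minimality makes each `Xᵢ - xᵢ` nilpotent in the local
ring of `(G)` at `x`. This condition descends along field extensions, survives every field
embedding, however discontinuous, and implies isolatedness for any absolute value.

The roots of degree at most `δ` over `𝓛` are algebraic over `ℚ`, so an embedding of the algebraic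
numbers of `F` into `ℂ_p` maps them injectively to isolated roots of the image of `G`. Their
coordinates have degree at most `d * δ` over `ℚ_p` and thus lie in `L`, where `γ` bounds their
number.
-/

open MvPolynomial Filter Topology

/-- The zero set in `F^n` of a `k`-tuple of `n`-variate polynomials. -/
def zeroSet {F : Type*} [CommSemiring F] {k n : ℕ}
    (G : Fin k → MvPolynomial (Fin n) F) : Set (Fin n → F) :=
  {x | ∀ i, MvPolynomial.eval x (G i) = 0}

/-- `ζ` is an isolated root of the system `G`: it is a root, and an isolated point of the
zero set of `G` in the metric topology. -/
def IsIsolatedRoot {F : Type*} [NormedField F] {k n : ℕ}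
    (G : Fin k → MvPolynomial (Fin n) F) (ζ : Fin n → F) : Prop :=
  ζ ∈ zeroSet G ∧ 𝓝[zeroSet G \ {ζ}] ζ = ⊥

/-- A `k × n` `m`-sparse polynomial system: all the `gᵢ` are nonzero and the union of their
supports has exactly `m` elements. -/
def IsSparseSystem {F : Type*} [CommSemiring F] {k n : ℕ}
    (G : Fin k → MvPolynomial (Fin n) F) (m : ℕ) : Prop :=
  (∀ i, G i ≠ 0) ∧ (Finset.univ.biUnion fun i => (G i).support).card = m

/-- The property that `γ : ℕ × ℕ → ℕ` bounds the number of isolated roots of sparse systems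
over finite extensions of `ℚ_p`, for all primes `p`.  Here `Cp` ranges over all fields
satisfying the characterizing axioms of `ℂ_p` (a complete algebraically closed ultrametric
field, containing `ℚ_p` isometrically, in which the elements algebraic over `ℚ_p` are dense),
`L` is a degree-`d` extension of `ℚ_p` regarded as a subfield of `ℂ_p`, with ramification
degree `eL` and residue field degree `fL` (characterized by `eL * fL = d` together with the
fact that the value group of `L` is `(1/eL)·ℤ`, i.e. `‖L*‖ = p^{(1/eL)·ℤ}`). -/
def LocalSparseBound (γ : ℕ × ℕ → ℕ) : Prop :=
  ∀ (p : ℕ) (_ : Fact p.Prime) (d : ℕ) (_ : 0 < d)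
    (Cp : Type) (_ : NormedField Cp) (_ : IsUltrametricDist Cp)
    (_ : CompleteSpace Cp) (_ : IsAlgClosed Cp) (_ : Algebra ℚ_[p] Cp)
    (_ : Isometry (algebraMap ℚ_[p] Cp))
    (_ : Dense {x : Cp | IsAlgebraic ℚ_[p] x})
    (L : Type) (_ : Field L) (_ : Algebra ℚ_[p] L) (_ : Algebra L Cp)
    (_ : IsScalarTower ℚ_[p] L Cp) (_ : FiniteDimensional ℚ_[p] L)
    (_ : Module.finrank ℚ_[p] L = d)
    (eL fL : ℕ) (_ : 0 < eL) (_ : eL * fL = d)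
    (_ : ∀ x : L, x ≠ 0 → ∃ j : ℤ, ‖algebraMap L Cp x‖ = (p : ℝ) ^ ((j : ℝ) / (eL : ℝ)))
    (_ : ∃ x : L, x ≠ 0 ∧ ‖algebraMap L Cp x‖ = (p : ℝ) ^ (-(1 : ℝ) / (eL : ℝ)))
    (k n m : ℕ) (G : Fin k → MvPolynomial (Fin n) L), IsSparseSystem G m →
      {ζ : Fin n → L | IsIsolatedRoot (fun i => (G i).map (algebraMap L Cp))
          (fun j => algebraMap L Cp (ζ j))}.Finite ∧
      ({ζ : Fin n → L | IsIsolatedRoot (fun i => (G i).map (algebraMap L Cp))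
          (fun j => algebraMap L Cp (ζ j))}.ncard : ℝ) ≤
        (p : ℝ) ^ (d * n) * (1 - 1 / (p : ℝ) ^ fL) ^ n * γ (n, m)


/-- `x` is algebraic of degree at most `δ` over (the image of) `L`, i.e. it is annihilated by
some nonzero polynomial over `L` of degree at most `δ`. -/
def HasDegreeAtMost {L F : Type*} [Field L] [Field F] (ι : L →+* F) (δ : ℕ) (x : F) : Prop :=
  ∃ q : Polynomial L, q ≠ 0 ∧ q.natDegree ≤ δ ∧ Polynomial.eval₂ ι x q = 0

section MinimalPrimes

theorem exists_notMem_mul_pow_mem_of_mem_minimalPrimes {R : Type*} [CommRing R]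
    {I p : Ideal R} (hp : p ∈ I.minimalPrimes) {r : R} (hr : r ∈ p) :
    ∃ h ∉ p, ∃ N : ℕ, h * r ^ N ∈ I := by
  have : p.IsPrime := hp.isPrime
  let Rₚ := Localization.AtPrime p
  have hrad : algebraMap R Rₚ r ∈ (I.map (algebraMap R Rₚ)).radical := by
    rw [IsLocalization.AtPrime.radical_map_of_mem_minimalPrimes Rₚ p I hp]
    exact Ideal.mem_map_of_mem _ hr
  obtain ⟨N, hN⟩ := hrad
  rw [← map_pow, IsLocalization.algebraMap_mem_map_algebraMap_iff p.primeCompl Rₚ] at hN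
  obtain ⟨h, hh, hmem⟩ := hN
  exact ⟨h, hh, N, hmem⟩

theorem under_mem_minimalPrimes {A B : Type*} [CommRing A] [CommRing B] [Algebra A B]
    [Algebra.HasGoingDown A B] {I : Ideal A} {Q : Ideal B}
    (hQ : Q ∈ (I.map (algebraMap A B)).minimalPrimes) : Q.under A ∈ I.minimalPrimes := by
  have : Q.IsPrime := hQ.isPrime
  refine ⟨⟨inferInstance, Ideal.map_le_iff_le_comap.1 hQ.le⟩, fun p ⟨_, hIp⟩ hpQ => ?_⟩
  obtain ⟨P, hPQ, hP, hPp⟩ := Ideal.exists_ideal_le_liesOver_of_le Q hpQ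
  rw [hPp.over] at hIp ⊢
  exact Ideal.comap_mono (hQ.2 ⟨hP, Ideal.map_le_iff_le_comap.2 hIp⟩ hPQ)

attribute [local instance] algebraMvPolynomial in
theorem comap_map_mem_minimalPrimes {σ K F : Type*} [Field K] [Field F] (j : K →+* F)
    {I : Ideal (MvPolynomial σ K)} {Q : Ideal (MvPolynomial σ F)}
    (hQ : Q ∈ (I.map (MvPolynomial.map j)).minimalPrimes) :
    Q.comap (MvPolynomial.map j) ∈ I.minimalPrimes := by
  let := j.toAlgebra
  have : Module.Flat (MvPolynomial σ K) (MvPolynomial σ F) :=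
    .isBaseChange K (MvPolynomial σ K) F _ (Algebra.IsPushout.out (R := K) (R' := F))
  exact under_mem_minimalPrimes hQ

end MinimalPrimes

section Roots

theorem tendsto_nhds_of_tendsto_sub_pow {β K : Type*} [NormedField K] {l : Filter β} {u : β → K}
    {z : K} {N : ℕ} (hN : N ≠ 0) (h : Tendsto (fun b => (u b - z) ^ N) l (𝓝 0)) :
    Tendsto u l (𝓝 z) := by
  rw [← tendsto_sub_nhds_zero_iff]
  rw [← Asymptotics.isLittleO_one_iff K] at h ⊢
  exact .of_pow (by simpa only [Pi.pow_def, one_pow] using h) hN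

theorem exists_isRoot_norm_sub_pow_le {K : Type*} [NormedField K] {q : Polynomial K} (hq : q.Monic)
    (hs : q.Splits) (hdeg : q.natDegree ≠ 0) (z : K) :
    ∃ w, q.IsRoot w ∧ ‖w - z‖ ^ q.natDegree ≤ ‖q.eval z‖ := by
  classical
  have hcard : q.roots.card = q.natDegree := hs.natDegree_eq_card_roots.symm
  have hne : q.roots.toFinset.Nonempty := by
    rw [Multiset.toFinset_nonempty, ← Multiset.card_pos, hcard]
    exact hdeg.pos
  obtain ⟨w, hw, hmin⟩ := q.roots.toFinset.exists_min_image (fun w => ‖w - z‖) hne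
  refine ⟨w, Polynomial.isRoot_of_mem_roots (Multiset.mem_toFinset.1 hw), ?_⟩
  calc ‖w - z‖ ^ q.natDegree = (q.roots.map fun _ => ‖w - z‖).prod := by simp [hcard]
    _ ≤ (q.roots.map fun r => ‖z - r‖).prod :=
        Multiset.prod_map_le_prod_map₀ _ _ (fun _ _ => norm_nonneg _) fun r hr =>
          (hmin r (Multiset.mem_toFinset.2 hr)).trans_eq (norm_sub_rev r z)
    _ = ‖q.eval z‖ := by
        rw [hs.eval_eq_prod_roots_of_monic hq]
        exact q.roots.prod_hom' (normHom : K →*₀ ℝ) (z - ·)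

theorem exists_isRoot_tendsto {β K : Type*} [NormedField K] {l : Filter β} {q : β → Polynomial K}
    {N : ℕ} (hN : N ≠ 0) (hq : ∀ b, (q b).Monic) (hs : ∀ b, (q b).Splits)
    (hdeg : ∀ b, (q b).natDegree = N) {z : K} (hz : Tendsto (fun b => (q b).eval z) l (𝓝 0)) :
    ∃ w : β → K, (∀ b, (q b).IsRoot (w b)) ∧ Tendsto w l (𝓝 z) := by
  choose w hw hwz using fun b =>
    exists_isRoot_norm_sub_pow_le (hq b) (hs b) ((hdeg b).trans_ne hN) z
  have h_pow (b : β) : ‖(w b - z) ^ N‖ ≤ ‖(q b).eval z‖ := by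
    rw [norm_pow, ← hdeg b]
    exact hwz b
  exact ⟨w, hw,
    tendsto_nhds_of_tendsto_sub_pow hN (squeeze_zero_norm h_pow (tendsto_norm_zero.comp hz))⟩

end Roots

section Lifting

variable {A B K : Type*} [CommRing A] [CommRing B] [Algebra A B] [Algebra.IsIntegral A B]
  [FaithfulSMul A B] [Field K] [IsAlgClosed K]

theorem exists_ringHom_comp_algebraMap_eq (f : A →+* K) :
    ∃ φ : B →+* K, φ.comp (algebraMap A B) = f := by
  have : (RingHom.ker f).IsPrime := RingHom.ker_isPrime f
  obtain ⟨Q, -, hQ, hQf⟩ := Ideal.exists_ideal_over_prime_of_isIntegral (S := B) (RingHom.ker f) ⊥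
    (by rw [Ideal.comap_bot_of_injective _ (FaithfulSMul.algebraMap_injective A B)]; exact bot_le)
  have : Q.LiesOver (RingHom.ker f) := ⟨hQf.symm⟩
  let := (RingHom.kerLift f).toAlgebra
  have : FaithfulSMul (A ⧸ RingHom.ker f) K :=
    (faithfulSMul_iff_algebraMap_injective _ _).2 (RingHom.kerLift_injective f)
  have : Module.IsTorsionFree (A ⧸ RingHom.ker f) (B ⧸ Q) := FaithfulSMul.to_isTorsionFree _ _
  let ψ : (B ⧸ Q) →ₐ[A ⧸ RingHom.ker f] K := IsAlgClosed.lift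
  exact ⟨ψ.toRingHom.comp (Ideal.Quotient.mk Q),
    RingHom.ext fun a => ψ.commutes (Ideal.Quotient.mk _ a)⟩

theorem exists_ringHom_comp_algebraMap_eq_and_apply_eq [IsDomain A] [IsIntegrallyClosed A]
    [IsDomain B] (f : A →+* K) (u : B) {w : K} (hw : (minpoly A u).eval₂ f w = 0) :
    ∃ φ : B →+* K, φ.comp (algebraMap A B) = f ∧ φ u = w := by
  have hu : IsIntegral A u := Algebra.IsIntegral.isIntegral u
  let h : AdjoinRoot (minpoly A u) →ₐ[A] B :=
    (Algebra.adjoin A {u}).val.comp (AdjoinRoot.Minpoly.toAdjoin A u)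
  have h_root : h (AdjoinRoot.root _) = u := by simp [h]
  let := h.toAlgebra
  have : IsScalarTower A (AdjoinRoot (minpoly A u)) B := .of_algebraMap_eq' h.comp_algebraMap.symm
  have : Algebra.IsIntegral (AdjoinRoot (minpoly A u)) B := .tower_top (R := A)
  have : FaithfulSMul (AdjoinRoot (minpoly A u)) B := (faithfulSMul_iff_algebraMap_injective _ _).2
    (Subtype.val_injective.comp (minpoly.ToAdjoin.injective hu))
  obtain ⟨φ, hφ⟩ := exists_ringHom_comp_algebraMap_eq (B := B) (AdjoinRoot.lift f w hw)
  refine ⟨φ, RingHom.ext fun a => ?_, ?_⟩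
  · simpa [IsScalarTower.algebraMap_apply A (AdjoinRoot (minpoly A u)) B] using
      DFunLike.congr_fun hφ (algebraMap A _ a)
  · rw [← h_root]
    exact (DFunLike.congr_fun hφ _).trans (AdjoinRoot.lift_root hw)

end Lifting

section Limits

variable {A B K β : Type*} [CommRing A] [CommRing B] [Algebra A B] [NormedField K] {l : Filter β}

theorem tendsto_eval₂ {f : β → A →+* K} {f₀ : A →+* K} (hf : ∀ a, Tendsto (f · a) l (𝓝 (f₀ a)))
    (P : Polynomial A) (z : K) : Tendsto (fun b => P.eval₂ (f b) z) l (𝓝 (P.eval₂ f₀ z)) := by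
  simp only [Polynomial.eval₂_eq_sum_range]
  exact tendsto_finsetSum _ fun i _ => (hf _).mul_const _

theorem tendsto_cauchyBound_map {f : β → A →+* K} {f₀ : A →+* K}
    (hf : ∀ a, Tendsto (f · a) l (𝓝 (f₀ a))) {P : Polynomial A} (hP : P.Monic) :
    Tendsto (fun b => (P.map (f b)).cauchyBound) l (𝓝 (P.map f₀).cauchyBound) := by
  simp only [Polynomial.cauchyBound, (hP.map _).leadingCoeff, hP.natDegree_map,
    Polynomial.coeff_map, nnnorm_one, div_one]
  exact (Tendsto.finset_sup_nhds_apply fun i _ => (hf _).nnnorm).add_const 1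

variable {φ : β → B →+* K} {f₀ : A →+* K}

theorem isBoundedUnder_norm_apply_of_isIntegral
    (hφ : ∀ a, Tendsto (φ · (algebraMap A B a)) l (𝓝 (f₀ a))) {y : B} (hy : IsIntegral A y) :
    IsBoundedUnder (· ≤ ·) l fun b => ‖φ b y‖ := by
  obtain ⟨P, hP, hPy⟩ := hy
  let f (b : β) : A →+* K := (φ b).comp (algebraMap A B)
  have h_root (b : β) : (P.map (f b)).IsRoot (φ b y) := by
    rw [Polynomial.IsRoot, Polynomial.eval_map, ← Polynomial.hom_eval₂, hPy, map_zero]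
  have h_lim : Tendsto (fun b => ((P.map (f b)).cauchyBound : ℝ)) l (𝓝 (P.map f₀).cauchyBound) :=
    NNReal.tendsto_coe.2 (tendsto_cauchyBound_map hφ hP)
  exact h_lim.isBoundedUnder_le.mono_le <| .of_forall fun b =>
    ((h_root b).norm_lt_cauchyBound (hP.map _).ne_zero).le

theorem tendsto_apply_zero_of_mem_map_ker [Algebra.IsIntegral A B]
    (hφ : ∀ a, Tendsto (φ · (algebraMap A B a)) l (𝓝 (f₀ a))) {y : B}
    (hy : y ∈ (RingHom.ker f₀).map (algebraMap A B)) : Tendsto (φ · y) l (𝓝 0) := by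
  induction hy using Submodule.span_induction with
  | mem y hy =>
    obtain ⟨a, ha, rfl⟩ := hy
    exact RingHom.mem_ker.1 ha ▸ hφ a
  | zero => simpa only [map_zero] using tendsto_const_nhds
  | add y z _ _ hy hz => simpa using hy.add hz
  | smul c y _ hy =>
    simpa using isBoundedUnder_le_mul_tendsto_zero
      (isBoundedUnder_norm_apply_of_isIntegral hφ (Algebra.IsIntegral.isIntegral c)) hy

variable [IsDomain A] [IsIntegrallyClosed A] [IsDomain B] [Algebra.IsIntegral A B]
  [FaithfulSMul A B] [IsAlgClosed K] {f : β → A →+* K}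

theorem exists_lift_tendsto_apply (φ₀ : B →+* K)
    (hf : ∀ a, Tendsto (f · a) l (𝓝 (φ₀ (algebraMap A B a)))) (u : B) :
    ∃ φ : β → B →+* K, (∀ b, (φ b).comp (algebraMap A B) = f b) ∧
      Tendsto (φ · u) l (𝓝 (φ₀ u)) := by
  have hu : IsIntegral A u := Algebra.IsIntegral.isIntegral u
  have h_monic := minpoly.monic hu
  have h_zero : (minpoly A u).eval₂ (φ₀.comp (algebraMap A B)) (φ₀ u) = 0 := by
    rw [← Polynomial.hom_eval₂, ← Polynomial.aeval_def, minpoly.aeval, map_zero]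
  have h_eval : Tendsto (fun b => ((minpoly A u).map (f b)).eval (φ₀ u)) l (𝓝 0) := by
    simpa only [Polynomial.eval_map, h_zero] using
      tendsto_eval₂ (f₀ := φ₀.comp (algebraMap A B)) hf (minpoly A u) (φ₀ u)
  obtain ⟨w, hw, hwu⟩ := exists_isRoot_tendsto (minpoly.natDegree_pos hu).ne'
    (fun b => h_monic.map _) (fun b => IsAlgClosed.splits _) (fun b => h_monic.natDegree_map _)
    h_eval
  choose φ hφf hφu using fun b => exists_ringHom_comp_algebraMap_eq_and_apply_eq (f b) u
    ((Polynomial.eval_map (f b) (w b)).symm.trans (hw b))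
  exact ⟨φ, hφf, hwu.congr fun b => (hφu b).symm⟩

theorem exists_lift_forall_tendsto_apply_zero {σ : Type*} [Finite σ] (φ₀ : B →+* K)
    (hf : ∀ a, Tendsto (f · a) l (𝓝 (φ₀ (algebraMap A B a)))) {y : σ → B}
    (hy : ∀ i, y i ∈ RingHom.ker φ₀) :
    ∃ φ : β → B →+* K, (∀ b, (φ b).comp (algebraMap A B) = f b) ∧
      ∀ i, Tendsto (φ · (y i)) l (𝓝 0) := by
  have := Fintype.ofFinite σ
  have : (RingHom.ker φ₀).IsPrime := RingHom.ker_isPrime φ₀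
  -- On the fibre through `φ₀`, `∏ j, v j` is nonzero only where every `y i` vanishes, so lifts that
  -- keep its value close to `φ₀ (∏ j, v j) ≠ 0` keep every `y i` close to `0`.
  choose v hv N hvN using fun i => exists_notMem_mul_pow_mem_of_mem_minimalPrimes
    (Ideal.IsIntegral.mem_minimalPrimes_map_under (R := A) (RingHom.ker φ₀)) (hy i)
  have hv_prod : φ₀ (∏ j, v j) ≠ 0 := by
    rw [map_prod]
    exact Finset.prod_ne_zero_iff.2 fun j _ => hv j
  obtain ⟨φ, hφf, hφv⟩ := exists_lift_tendsto_apply φ₀ hf (∏ j, v j)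
  have hφ (a : A) : Tendsto (φ · (algebraMap A B a)) l (𝓝 (φ₀.comp (algebraMap A B) a)) :=
    (hf a).congr fun b => (DFunLike.congr_fun (hφf b) a).symm
  refine ⟨φ, hφf, fun i => ?_⟩
  have h_mem : (∏ j, v j) * y i ^ N i ∈
      (RingHom.ker (φ₀.comp (algebraMap A B))).map (algebraMap A B) :=
    Ideal.mem_of_dvd _ (mul_dvd_mul_right (Finset.dvd_prod_of_mem v (Finset.mem_univ i)) _) (hvN i)
  have h_prod : Tendsto (fun b => φ b (∏ j, v j) * φ b (y i) ^ (N i + 1)) l (𝓝 0) := by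
    simpa only [map_mul, map_pow, mul_assoc, ← pow_succ] using
      tendsto_apply_zero_of_mem_map_ker hφ (Ideal.mul_mem_right (y i) _ h_mem)
  have h_pow : Tendsto (fun b => (φ b (y i) - 0) ^ (N i + 1)) l (𝓝 0) := by
    rw [← zero_div (φ₀ (∏ j, v j))]
    refine (h_prod.div hφv hv_prod).congr' ?_
    filter_upwards [hφv.eventually_ne hv_prod] with b hb
    rw [Pi.div_apply, mul_div_cancel_left₀ _ hb, zero_div, sub_zero]
  exact tendsto_nhds_of_tendsto_sub_pow (N i).succ_ne_zero h_pow

end Limits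

section Accumulation

variable {K σ : Type*} [NontriviallyNormedField K] [IsAlgClosed K] [Finite σ]

theorem exists_algHom_ne_mem_of_mem_nhds {B : Type*} [CommRing B] [IsDomain B] [Algebra K B]
    [Algebra.FiniteType K B] {φ₀ : B →ₐ[K] K} (hφ₀ : RingHom.ker φ₀ ≠ ⊥) (y : σ → B)
    {U : Set (σ → K)} (hU : U ∈ 𝓝 fun i => φ₀ (y i)) :
    ∃ φ : B →ₐ[K] K, φ ≠ φ₀ ∧ (fun i => φ (y i)) ∈ U := by
  obtain ⟨s, g, hg, hint⟩ := exists_integral_inj_algHom_of_fg K B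
  let := g.toAlgebra
  have : Algebra.IsIntegral (MvPolynomial (Fin s) K) B := ⟨hint⟩
  have : FaithfulSMul (MvPolynomial (Fin s) K) B := (faithfulSMul_iff_algebraMap_injective _ _).2 hg
  let a (j : Fin s) : K := φ₀ (g (X j))
  have hφ₀g : φ₀.comp g = aeval a := by ext; simp [a]
  have : Nonempty (Fin s) := by
    by_contra h_empty
    rw [not_nonempty_iff] at h_empty
    refine Ideal.IsIntegral.comap_ne_bot (MvPolynomial (Fin s) K) hφ₀ (eq_bot_iff.2 fun c hc => ?_)
    have hc' : φ₀.comp g c = 0 := hc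
    rw [c.eq_C_of_isEmpty] at hc' ⊢
    simpa [hφ₀g] using hc'
  have : (𝓝[≠] a).NeBot := Module.punctured_nhds_neBot K (Fin s → K) a
  have h_eval (c : MvPolynomial (Fin s) K) :
      Tendsto (fun b => eval b c) (𝓝[≠] a) (𝓝 (φ₀ (g c))) := by
    rw [← AlgHom.comp_apply, hφ₀g, aeval_eq_eval]
    exact (continuous_eval c).continuousAt.continuousWithinAt
  obtain ⟨φ, hφ, hφy⟩ := exists_lift_forall_tendsto_apply_zero (φ₀ : B →+* K) h_eval
    (y := fun i => y i - algebraMap K B (φ₀ (y i))) (fun i => by simp)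
  have hφg (b : Fin s → K) (c : MvPolynomial (Fin s) K) : φ b (g c) = eval b c :=
    DFunLike.congr_fun (hφ b) c
  have hφK (b : Fin s → K) (c : K) : φ b (algebraMap K B c) = c := by
    rw [← g.commutes, hφg, algebraMap_eq, eval_C]
  have h_lim : Tendsto (fun b i => φ b (y i)) (𝓝[≠] a) (𝓝 fun i => φ₀ (y i)) :=
    tendsto_pi_nhds.2 fun i =>
      tendsto_sub_nhds_zero_iff.1 (by simpa only [map_sub, hφK] using hφy i)
  obtain ⟨b, hbU, hba⟩ := ((h_lim.eventually_mem hU).and self_mem_nhdsWithin).exists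
  refine ⟨{ φ b with commutes' := hφK b }, fun h => hba (funext fun j => ?_), hbU⟩
  simpa [hφg] using DFunLike.congr_fun h (g (X j))

theorem accPt_zeroLocus_of_lt_vanishingIdeal {p : Ideal (MvPolynomial σ K)} [p.IsPrime] {x : σ → K}
    (hp : p < vanishingIdeal K {x}) : AccPt x (𝓟 (zeroLocus K p)) := by
  obtain ⟨hpx, f, hfx, hfp⟩ := SetLike.lt_iff_le_and_exists.1 hp
  rw [mem_vanishingIdeal_singleton_iff] at hfx
  let φ₀ : (MvPolynomial σ K ⧸ p) →ₐ[K] K := Ideal.Quotient.liftₐ p (aeval x) fun q hq =>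
    (mem_vanishingIdeal_singleton_iff x q).1 (hpx hq)
  have hφ₀ : RingHom.ker φ₀ ≠ ⊥ := fun h =>
    hfp (Ideal.Quotient.eq_zero_iff_mem.1 (h.le (x := Ideal.Quotient.mk p f) hfx))
  refine accPt_iff_nhds.2 fun U hU => ?_
  obtain ⟨φ, hφ, hφU⟩ := exists_algHom_ne_mem_of_mem_nhds hφ₀ (fun i => Ideal.Quotient.mk p (X i))
    (by simpa [φ₀] using hU)
  have h_aeval : φ.comp (Ideal.Quotient.mkₐ K p) = aeval fun i => φ (Ideal.Quotient.mk p (X i)) :=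
    by ext; simp
  refine ⟨_, ⟨hφU, fun q hq => ?_⟩, fun h => hφ (Ideal.Quotient.algHom_ext K ?_)⟩
  · rw [← h_aeval, AlgHom.comp_apply, Ideal.Quotient.mkₐ_eq_mk, Ideal.Quotient.eq_zero_iff_mem.2 hq,
      map_zero]
  · ext i
    simpa [φ₀] using congrFun h i

end Accumulation

section IsolatedRoots

variable {K F : Type*} {k n : ℕ}

theorem zeroLocus_span_range [Field K] (G : Fin k → MvPolynomial (Fin n) K) :
    zeroLocus K (Ideal.span (Set.range G)) = zeroSet G := by
  ext x
  simp [zeroLocus_span, zeroSet, aeval_eq_eval]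

theorem eval_map_apply_comp [CommSemiring K] [CommSemiring F] (τ : K →+* F) (x : Fin n → K)
    (f : MvPolynomial (Fin n) K) : eval (fun j => τ (x j)) (map τ f) = τ (eval x f) :=
  (eval_map ..).trans (eval₂_comp ..).symm

theorem comp_mem_zeroSet_map_iff [Field K] [Field F] (τ : K →+* F)
    {G : Fin k → MvPolynomial (Fin n) K} {x : Fin n → K} :
    (fun j => τ (x j)) ∈ zeroSet (fun i => map τ (G i)) ↔ x ∈ zeroSet G :=
  forall_congr' fun i => by rw [eval_map_apply_comp, map_eq_zero]

/-- The algebraic form of isolatedness of the root `x` of `G`, over any field: each `X i - x i` is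
nilpotent in the local ring at `x` of the scheme cut out by `G`. The witness `h` with `h(x) ≠ 0`
clears denominators, so that the condition is one about polynomials. -/
def IsAlgebraicallyIsolatedRoot [Field K] (G : Fin k → MvPolynomial (Fin n) K) (x : Fin n → K) :
    Prop :=
  x ∈ zeroSet G ∧
    ∀ i, ∃ h, eval x h ≠ 0 ∧ ∃ N, h * (X i - C (x i)) ^ N ∈ Ideal.span (Set.range G)

theorem isIsolatedRoot_iff [NormedField K] {G : Fin k → MvPolynomial (Fin n) K} {x : Fin n → K} :
    IsIsolatedRoot G x ↔ x ∈ zeroSet G ∧ ∀ᶠ y in 𝓝 x, y ∈ zeroSet G → y = x := by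
  refine and_congr_right fun _ => ?_
  rw [← empty_mem_iff_bot, mem_nhdsWithin_iff_eventually]
  simp

theorem IsIsolatedRoot.vanishingIdeal_mem_minimalPrimes [NontriviallyNormedField K]
    [IsAlgClosed K] {G : Fin k → MvPolynomial (Fin n) K} {x : Fin n → K} (hx : IsIsolatedRoot G x) :
    vanishingIdeal K {x} ∈ (Ideal.span (Set.range G)).minimalPrimes := by
  have h_le : Ideal.span (Set.range G) ≤ vanishingIdeal K {x} := by
    rw [← le_zeroLocus_iff_le_vanishingIdeal (K := K), zeroLocus_span_range]
    exact Set.singleton_subset_iff.2 hx.1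
  obtain ⟨p, hp, hpx⟩ := Ideal.exists_minimalPrimes_le h_le
  have : p.IsPrime := hp.isPrime
  obtain rfl | hlt := hpx.eq_or_lt
  · exact hp
  · have h_acc := (accPt_zeroLocus_of_lt_vanishingIdeal hlt).mono
      (principal_mono.2 (zeroLocus_anti_mono hp.le))
    rw [zeroLocus_span_range, accPt_principal_iff_nhdsWithin] at h_acc
    exact (h_acc.ne hx.2).elim

theorem IsIsolatedRoot.isAlgebraicallyIsolatedRoot_of_map [Field K] [NontriviallyNormedField F]
    [IsAlgClosed F] {j : K →+* F} {G : Fin k → MvPolynomial (Fin n) K} {x : Fin n → K}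
    (hx : IsIsolatedRoot (fun i => (G i).map j) (fun i => j (x i))) :
    IsAlgebraicallyIsolatedRoot G x := by
  refine ⟨(comp_mem_zeroSet_map_iff j).1 hx.1, fun i => ?_⟩
  have h_min : vanishingIdeal F {fun i => j (x i)} ∈
      ((Ideal.span (Set.range G)).map (MvPolynomial.map j)).minimalPrimes := by
    rw [Ideal.map_span, ← Set.range_comp]
    exact hx.vanishingIdeal_mem_minimalPrimes
  have h_mem : X i - C (x i) ∈
      (vanishingIdeal F {fun i => j (x i)}).comap (MvPolynomial.map j) := by simp
  obtain ⟨h, hh, N, hN⟩ := exists_notMem_mul_pow_mem_of_mem_minimalPrimes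
    (comap_map_mem_minimalPrimes j h_min) h_mem
  exact ⟨h, by simpa [aeval_eq_eval, eval_map_apply_comp, -eval_map] using hh, N, hN⟩

theorem IsAlgebraicallyIsolatedRoot.map [Field K] [Field F] {G : Fin k → MvPolynomial (Fin n) K}
    {x : Fin n → K} (hx : IsAlgebraicallyIsolatedRoot G x) (τ : K →+* F) :
    IsAlgebraicallyIsolatedRoot (fun i => (G i).map τ) (fun j => τ (x j)) := by
  refine ⟨(comp_mem_zeroSet_map_iff τ).2 hx.1, fun i => ?_⟩
  obtain ⟨h, hh, N, hN⟩ := hx.2 i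
  refine ⟨h.map τ, by simpa only [eval_map_apply_comp, map_ne_zero] using hh, N, ?_⟩
  have h_map := Ideal.mem_map_of_mem (MvPolynomial.map τ) hN
  rw [Ideal.map_span, ← Set.range_comp] at h_map
  simpa [Function.comp_def] using h_map

theorem IsAlgebraicallyIsolatedRoot.isIsolatedRoot [NormedField K]
    {G : Fin k → MvPolynomial (Fin n) K} {x : Fin n → K} (hx : IsAlgebraicallyIsolatedRoot G x) :
    IsIsolatedRoot G x := by
  choose h hh N hN using hx.2
  refine isIsolatedRoot_iff.2 ⟨hx.1, ?_⟩
  have h_ev : ∀ᶠ y in 𝓝 x, ∀ i, eval y (h i) ≠ 0 :=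
    eventually_all.2 fun i => (continuous_eval (h i)).continuousAt.eventually_ne (hh i)
  filter_upwards [h_ev] with y hhy hy
  funext i
  rw [← zeroLocus_span_range] at hy
  have h_zero : eval y (h i) * (y i - x i) ^ N i = 0 := by
    simpa only [aeval_eq_eval, map_mul, map_pow, map_sub, eval_X, eval_C] using hy _ (hN i)
  exact sub_eq_zero.1 (eq_zero_of_pow_eq_zero ((mul_eq_zero.1 h_zero).resolve_left (hhy i)))

end IsolatedRoots

section Degree

variable {k L F C : Type*} [Field k] [Field L] [Field F] [Field C] {ι : L →+* F} {δ : ℕ} {z : F}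

theorem hasDegreeAtMost_apply (ι : L →+* F) (hδ : 0 < δ) (c : L) : HasDegreeAtMost ι δ (ι c) :=
  ⟨Polynomial.X - Polynomial.C c, Polynomial.X_sub_C_ne_zero c,
    (Polynomial.natDegree_X_sub_C c).trans_le hδ, by simp⟩

theorem HasDegreeAtMost.of_comp {κ : k →+* L} (hz : HasDegreeAtMost (ι.comp κ) δ z) :
    HasDegreeAtMost ι δ z := by
  obtain ⟨q, hq, hqδ, hqz⟩ := hz
  exact ⟨q.map κ, (Polynomial.map_ne_zero_iff κ.injective).2 hq,
    Polynomial.natDegree_map_le.trans hqδ, by rwa [Polynomial.eval₂_map]⟩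

theorem hasDegreeAtMost_comp_apply_iff (τ : F →+* C) :
    HasDegreeAtMost (τ.comp ι) δ (τ z) ↔ HasDegreeAtMost ι δ z := by
  simp only [HasDegreeAtMost, ← Polynomial.hom_eval₂, map_eq_zero]

theorem HasDegreeAtMost.algebraMap_finrank_mul [Algebra k L] [FiniteDimensional k L] [Algebra k F]
    {ι : L →ₐ[k] F} (hz : HasDegreeAtMost (ι : L →+* F) δ z) :
    HasDegreeAtMost (algebraMap k F) (Module.finrank k L * δ) z := by
  obtain ⟨q, hq, hqδ, hqz⟩ := hz
  let : Algebra L F := ι.toRingHom.toAlgebra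
  have : IsScalarTower k L F := .of_algebraMap_eq' ι.comp_algebraMap.symm
  have hz_int : IsIntegral L z := IsAlgebraic.isIntegral ⟨q, hq, hqz⟩
  let E := IntermediateField.adjoin L {z}
  have : FiniteDimensional L E := IntermediateField.adjoin.finiteDimensional hz_int
  have : FiniteDimensional k E := .trans k L E
  have : IsScalarTower k E F := .of_algebraMap_eq' rfl
  let z' : E := IntermediateField.AdjoinSimple.gen L z
  have hz'_int : IsIntegral k z' := .of_finite k z'
  refine ⟨minpoly k z', minpoly.ne_zero hz'_int, ?_, ?_⟩
  · calc (minpoly k z').natDegree ≤ Module.finrank k E := minpoly.natDegree_le z'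
      _ = Module.finrank k L * (minpoly L z).natDegree := by
        rw [← Module.finrank_mul_finrank k L E, IntermediateField.adjoin.finrank hz_int]
      _ ≤ Module.finrank k L * δ := by
        gcongr
        exact
          (Polynomial.natDegree_le_natDegree (minpoly.degree_le_of_ne_zero L z hq hqz)).trans hqδ
  · have h := congrArg (algebraMap E F) (minpoly.aeval k z')
    rw [← Polynomial.aeval_algebraMap_apply, map_zero] at h
    exact h

theorem HasDegreeAtMost.mem_sSup [Algebra k C] {z : C} {D : ℕ}
    (hz : HasDegreeAtMost (algebraMap k C) D z) :
    z ∈ sSup {E : IntermediateField k C | FiniteDimensional k E ∧ Module.finrank k E ≤ D} := by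
  obtain ⟨q, hq, hqD, hqz⟩ := hz
  have hz_int : IsIntegral k z := IsAlgebraic.isIntegral ⟨q, hq, hqz⟩
  have h_mem : IntermediateField.adjoin k {z} ∈
      {E : IntermediateField k C | FiniteDimensional k E ∧ Module.finrank k E ≤ D} := by
    refine ⟨IntermediateField.adjoin.finiteDimensional hz_int, ?_⟩
    rw [IntermediateField.adjoin.finrank hz_int]
    exact (Polynomial.natDegree_le_natDegree (minpoly.degree_le_of_ne_zero k z hq hqz)).trans hqD
  exact le_sSup h_mem (IntermediateField.mem_adjoin_simple_self k z)

end Degree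

theorem IsSparseSystem.map {K F : Type*} [Field K] [Field F] {k n m : ℕ}
    {G : Fin k → MvPolynomial (Fin n) K} (hG : IsSparseSystem G m) (κ : K →+* F) :
    IsSparseSystem (fun i => (G i).map κ) m := by
  refine ⟨fun i => (map_ne_zero_iff _ (map_injective κ κ.injective)).2 (hG.1 i), ?_⟩
  simpa only [support_map_of_injective _ κ.injective] using hG.2

theorem finite_and_ncard_le_of_forall_exists {X Y : Type*} [Nonempty Y] {S : Set X} {T : Set Y}
    {r : X → Y → Prop} (hr : ∀ x x' y, r x y → r x' y → x = x') (hT : T.Finite)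
    (h : ∀ x ∈ S, ∃ y ∈ T, r x y) : S.Finite ∧ S.ncard ≤ T.ncard := by
  choose! f hfT hfr using h
  have h_inj : Set.InjOn f S := fun x hx x' hx' hxx' =>
    hr x x' (f x) (hfr x hx) (hxx' ▸ hfr x' hx')
  exact ⟨.of_injOn hfT h_inj hT, Set.ncard_le_ncard_of_injOn f hfT h_inj hT⟩

section Transfer

variable {k₀ k 𝓛 K F C : Type*} [Field k₀] [Field k] [Algebra k₀ k] [Field 𝓛] [Algebra k₀ 𝓛]
  [FiniteDimensional k₀ 𝓛] [Field K] [Algebra k₀ K] {δ : ℕ}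

theorem HasDegreeAtMost.isAlgebraic {ι : 𝓛 →ₐ[k₀] K} {z : K}
    (hz : HasDegreeAtMost (ι : 𝓛 →+* K) δ z) : IsAlgebraic k₀ z := by
  obtain ⟨q, hq, -, hqz⟩ := hz.algebraMap_finrank_mul
  exact ⟨q, hq, hqz⟩

theorem HasDegreeAtMost.apply_mem_sSup [Field C] [Algebra k C] [Algebra k₀ C] [IsScalarTower k₀ k C]
    {ι : 𝓛 →ₐ[k₀] K} {z : K} (hz : HasDegreeAtMost (ι : 𝓛 →+* K) δ z) (τ : K →ₐ[k₀] C) :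
    τ z ∈ sSup {E : IntermediateField k C |
      FiniteDimensional k E ∧ Module.finrank k E ≤ Module.finrank k₀ 𝓛 * δ} := by
  have h := (hasDegreeAtMost_comp_apply_iff (τ : K →+* C)).2 hz.algebraMap_finrank_mul
  rw [τ.comp_algebraMap, IsScalarTower.algebraMap_eq k₀ k C] at h
  exact h.of_comp.mem_sSup

theorem exists_ringHom_forall_finite_and_ncard_le [NontriviallyNormedField F] [IsAlgClosed F]
    [Algebra k₀ F] [NormedField C] [IsAlgClosed C] [Algebra k C] [Algebra k₀ C]
    [IsScalarTower k₀ k C] (ι : 𝓛 →ₐ[k₀] F) (hδ : 0 < δ) {L : IntermediateField k C}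
    (hL : sSup {E : IntermediateField k C |
      FiniteDimensional k E ∧ Module.finrank k E ≤ Module.finrank k₀ 𝓛 * δ} ≤ L) :
    ∃ κ : 𝓛 →+* L, ∀ {r n : ℕ} (G : Fin r → MvPolynomial (Fin n) 𝓛),
      {ζ : Fin n → L | IsIsolatedRoot (fun i => ((G i).map κ).map (algebraMap L C))
        fun j => algebraMap L C (ζ j)}.Finite →
      {x | IsIsolatedRoot (fun i => (G i).map (ι : 𝓛 →+* F)) x ∧
        ∀ j, HasDegreeAtMost (ι : 𝓛 →+* F) δ (x j)}.Finite ∧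
      {x | IsIsolatedRoot (fun i => (G i).map (ι : 𝓛 →+* F)) x ∧
        ∀ j, HasDegreeAtMost (ι : 𝓛 →+* F) δ (x j)}.ncard ≤
        {ζ : Fin n → L | IsIsolatedRoot (fun i => ((G i).map κ).map (algebraMap L C))
          fun j => algebraMap L C (ζ j)}.ncard := by
  let K := algebraicClosure k₀ F
  let τ : K →ₐ[k₀] C := IsAlgClosed.lift
  have h_mem {z : F} (hz : HasDegreeAtMost (ι : 𝓛 →+* F) δ z) : z ∈ K :=
    mem_algebraicClosure_iff.2 hz.isAlgebraic
  let ι₀ : 𝓛 →ₐ[k₀] K :=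
    ι.codRestrict K.toSubalgebra fun c => h_mem (hasDegreeAtMost_apply (ι : 𝓛 →+* F) hδ c)
  have hτL {z : K} (hz : HasDegreeAtMost (ι : 𝓛 →+* F) δ (z : F)) : τ z ∈ L := by
    have hz' : HasDegreeAtMost (ι₀ : 𝓛 →+* K) δ z :=
      (hasDegreeAtMost_comp_apply_iff (algebraMap K F)).1 hz
    exact hL (hz'.apply_mem_sSup τ)
  let κ : 𝓛 →+* L := ((τ : K →+* C).comp ι₀).codRestrict L fun c =>
    hτL (hasDegreeAtMost_apply (ι : 𝓛 →+* F) hδ c)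
  refine ⟨κ, fun {r n} G hT => finite_and_ncard_le_of_forall_exists
    (r := fun x ζ => ∃ y : Fin n → K, (fun j => (y j : F)) = x ∧ ∀ j, τ (y j) = ζ j) ?_ hT ?_⟩
  · rintro _ _ ζ ⟨y, rfl, hy⟩ ⟨y', rfl, hy'⟩
    rw [funext fun j => τ.injective ((hy j).trans (hy' j).symm)]
  · rintro x ⟨hx, hxδ⟩
    let y (j : Fin n) : K := ⟨x j, h_mem (hxδ j)⟩
    have hy : IsAlgebraicallyIsolatedRoot (fun i => (G i).map (ι₀ : 𝓛 →+* K)) y := by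
      refine IsIsolatedRoot.isAlgebraicallyIsolatedRoot_of_map (j := algebraMap K F) ?_
      simp only [MvPolynomial.map_map]
      exact hx
    refine ⟨fun j => ⟨τ (y j), hτL (hxδ j)⟩, ?_, y, rfl, fun j => rfl⟩
    have h_map := (hy.map (τ : K →+* C)).isIsolatedRoot
    simp only [MvPolynomial.map_map, Set.mem_ofPred_eq] at h_map ⊢
    exact h_map

end Transfer

theorem bounded_degree_roots_number_field_explicit_general {γ : ℕ × ℕ → ℕ}
    (hγ : LocalSparseBound γ) (p : ℕ) [Fact p.Prime] {C : Type} [NormedField C]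
    [IsUltrametricDist C] [CompleteSpace C] [IsAlgClosed C] [Algebra ℚ_[p] C]
    (hC : Isometry (algebraMap ℚ_[p] C)) (hC_dense : Dense {x : C | IsAlgebraic ℚ_[p] x})
    {𝓛 F : Type*} [Field 𝓛] [Algebra ℚ 𝓛] [FiniteDimensional ℚ 𝓛] [NontriviallyNormedField F]
    [IsAlgClosed F] [CharZero F] (ι : 𝓛 →+* F) {δ : ℕ} (hδ : 0 < δ)
    (L : IntermediateField ℚ_[p] C) [FiniteDimensional ℚ_[p] L]
    (hL : sSup {E : IntermediateField ℚ_[p] C | FiniteDimensional ℚ_[p] E ∧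
      Module.finrank ℚ_[p] E ≤ Module.finrank ℚ 𝓛 * δ} ≤ L)
    {e f : ℕ} (he : 0 < e) (hef : e * f = Module.finrank ℚ_[p] L)
    (hval : ∀ x : L, x ≠ 0 → ∃ j : ℤ, ‖(x : C)‖ = (p : ℝ) ^ ((j : ℝ) / (e : ℝ)))
    (hunif : ∃ x : L, x ≠ 0 ∧ ‖(x : C)‖ = (p : ℝ) ^ (-(1 : ℝ) / (e : ℝ)))
    {k n m : ℕ} (G : Fin k → MvPolynomial (Fin n) 𝓛) (hG : IsSparseSystem G m) :
    {x | IsIsolatedRoot (fun i => (G i).map ι) x ∧ ∀ i, HasDegreeAtMost ι δ (x i)}.Finite ∧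
    ({x | IsIsolatedRoot (fun i => (G i).map ι) x ∧
      ∀ i, HasDegreeAtMost ι δ (x i)}.ncard : ℝ) ≤
      (p : ℝ) ^ (n * Module.finrank ℚ_[p] L) * (1 - 1 / (p : ℝ) ^ f) ^ n * γ (n, m) := by
  have : CharZero C := charZero_of_injective_algebraMap (algebraMap ℚ_[p] C).injective
  obtain ⟨κ, hκ⟩ := exists_ringHom_forall_finite_and_ncard_le ι.toRatAlgHom hδ hL
  obtain ⟨hT, hT_le⟩ := hγ p inferInstance (Module.finrank ℚ_[p] L) Module.finrank_pos C _
    inferInstance inferInstance inferInstance _ hC hC_dense L _ _ _ inferInstance inferInstance rfl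
    e f he hef hval hunif k n m (fun i => (G i).map κ) (hG.map κ)
  obtain ⟨hS, hST⟩ := hκ G hT
  rw [mul_comm n]
  exact ⟨hS, (Nat.cast_le.2 hST).trans hT_le⟩

/-- **Explicit bound for Corollary 3, number field case.** Suppose `γ(n,m)` bounds the number
of isolated roots of sparse systems over finite extensions of `ℚ_p` as in Theorem 1.  Let `L`
be the compositum inside `ℂ₂` of all finite extensions of `ℚ₂` of degree at most `d·δ`, and
let `D2` and `f2` be its degree and residue field degree over `ℚ₂`.  Then any `k × n`
`m`-sparse polynomial system over a degree-`d` extension `𝓛` of `ℚ`, regarded as a subfield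
of `ℂ` via an embedding `ι`, has at most `2^{n·D2}·(1 - 1/2^{f2})^n·γ(n,m)` isolated roots in
`ℂⁿ` of degree at most `δ` over `𝓛`. -/
theorem bounded_degree_roots_number_field_explicit (γ : ℕ × ℕ → ℕ) (hγ : LocalSparseBound γ)
    (d δ : ℕ) (hd : 0 < d) (hδ : 0 < δ) :
    ∀ (C2 : Type) (_ : NormedField C2) (_ : IsUltrametricDist C2)
      (_ : CompleteSpace C2) (_ : IsAlgClosed C2) (_ : Algebra ℚ_[2] C2)
      (_ : Isometry (algebraMap ℚ_[2] C2))
      (_ : Dense {x : C2 | IsAlgebraic ℚ_[2] x})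
      (L : IntermediateField ℚ_[2] C2),
      L = sSup {F : IntermediateField ℚ_[2] C2 |
            FiniteDimensional ℚ_[2] ↥F ∧ Module.finrank ℚ_[2] ↥F ≤ d * δ} →
      ∀ (_ : FiniteDimensional ℚ_[2] ↥L) (D2 f2 e2 : ℕ),
        Module.finrank ℚ_[2] ↥L = D2 → 0 < e2 → e2 * f2 = D2 →
        (∀ x : ↥L, x ≠ 0 → ∃ j : ℤ, ‖(x : C2)‖ = (2 : ℝ) ^ ((j : ℝ) / (e2 : ℝ))) →
        (∃ x : ↥L, x ≠ 0 ∧ ‖(x : C2)‖ = (2 : ℝ) ^ (-(1 : ℝ) / (e2 : ℝ))) →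
      ∀ (𝓛 : Type) (_ : Field 𝓛) (_ : Algebra ℚ 𝓛) (_ : FiniteDimensional ℚ 𝓛)
        (_ : Module.finrank ℚ 𝓛 = d)
        (ι : 𝓛 →+* ℂ)
        (k n m : ℕ) (G : Fin k → MvPolynomial (Fin n) 𝓛), IsSparseSystem G m →
          {x : Fin n → ℂ | IsIsolatedRoot (fun i => (G i).map ι) x ∧
              ∀ i, HasDegreeAtMost ι δ (x i)}.Finite ∧
          ({x : Fin n → ℂ | IsIsolatedRoot (fun i => (G i).map ι) x ∧
              ∀ i, HasDegreeAtMost ι δ (x i)}.ncard : ℝ) ≤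
            (2 : ℝ) ^ (n * D2) * (1 - 1 / (2 : ℝ) ^ f2) ^ n * γ (n, m) := by
  intro C2 _ _ _ _ _ hC2 hC2_dense L hL _ D2 f2 e2 hD2 he2 hef hval hunif 𝓛 _ _ _ hd𝓛 ι k n m G hG
  subst hL hD2 hd𝓛
  exact bounded_degree_roots_number_field_explicit_general hγ 2 hC2 hC2_dense
    ι hδ _ le_rfl he2 hef hval hunif G hG
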